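/- For any compact operator T on a Hilbert space and indices 0 < p < 2, 0 < q ≤ ∞, the Lorentz ideal quasinorm satisfies ‖T‖_{L_{p,q}} ≈ ‖(e(n,T)/(n+1)^{1/2})_{n≥0}‖_{ℓ_{p,q}}, where e(n,T) is the n-th Hilbert–Schmidt approximation number of T and the equivalence constants depend only on p, q. -/

import Mathlib

open MeasureTheory ENNReal

noncomputable section

/-- `n`-th singular value of `T`: distance in operator norm to operators of rank at most `n`. -/
def singVal {H : Type*} [NormedAddCommGroup H] [InnerProductSpace ℂ H]
    (T : H →L[ℂ] H) (n : ℕ) : ℝ :=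
  sInf {c : ℝ | ∃ R : H →L[ℂ] H,
    Module.rank ℂ (LinearMap.range (R : H →ₗ[ℂ] H)) ≤ (n : Cardinal) ∧ c = ‖T - R‖}

/-- Hilbert–Schmidt norm of `T` computed with respect to a Hilbert basis `e`. -/
def hsNorm {ι H : Type*} [NormedAddCommGroup H] [InnerProductSpace ℂ H]
    (e : HilbertBasis ι ℂ H) (T : H →L[ℂ] H) : ℝ≥0∞ :=
  (∑' i, ENNReal.ofReal (‖T (e i)‖ ^ 2)) ^ (1 / 2 : ℝ)

/-- `n`-th Hilbert–Schmidt approximation number of `T`. -/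
def hsApprox {ι H : Type*} [NormedAddCommGroup H] [InnerProductSpace ℂ H]
    (e : HilbertBasis ι ℂ H) (T : H →L[ℂ] H) (n : ℕ) : ℝ≥0∞ :=
  ⨅ R ∈ {R : H →L[ℂ] H |
      Module.rank ℂ (LinearMap.range (R : H →ₗ[ℂ] H)) ≤ (n : Cardinal)},
    hsNorm e (T - R)

/-- Lorentz sequence quasinorm `ℓ_{p,q}` of a nonnegative (already decreasing) sequence,
indexed from `n = 1` (so `x n` stands for `x_{n+1}`). -/
def lorentzNorm (p : ℝ) (q : ℝ≥0∞) (x : ℕ → ℝ≥0∞) : ℝ≥0∞ :=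
  if q = ∞ then ⨆ n : ℕ, ENNReal.ofReal (((n : ℝ) + 1) ^ (1 / p)) * x n
  else (∑' n : ℕ,
      (ENNReal.ofReal (((n : ℝ) + 1) ^ (1 / p - 1 / q.toReal)) * x n) ^ q.toReal) ^
    (1 / q.toReal)

/-!
Write `μ(n)` and `e(n)` for the approximation numbers of `T` in the operator norm and in the
Hilbert–Schmidt norm. As long as no operator of rank at most `n` is within distance `c` of `S`, one
can greedily find an orthonormal system of length `n + 1` on which `‖S v‖ > c`, so
`c √(n + 1) ≤ ‖S‖₂`. Applied to `S = T - R` with `R` of rank at most `n`, this gives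
`μ(2n) ≤ e(n) / √(n + 1)`.

Conversely, let `R j` be nearly optimal operators of rank `< 2 ^ (m + j)` for `T`. An operator of
rank `k` has Hilbert–Schmidt norm at most `√k` times its operator norm, so telescoping
`T - R 0 = ∑ (R (j + 1) - R j)` yields `e(2 ^ m - 1) ≤ 4 ∑ j, 2 ^ ((m + j) / 2) μ(2 ^ (m + j) - 1)`.

In the dyadic form of the `ℓ_{p,q}` quasinorm, which weights the value at `2 ^ m - 1` by
`2 ^ (m / p)`, the second bound becomes a Hardy inequality with geometric ratio
`2 ^ (1 / 2 - 1 / p)`, and this ratio is less than `1` exactly because `p < 2`.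
-/

lemma ofReal_natCast_add_one_rpow (n : ℕ) (c : ℝ) :
    ENNReal.ofReal (((n : ℝ) + 1) ^ c) = ((n : ℝ≥0∞) + 1) ^ c := by
  rw [← ENNReal.ofReal_rpow_of_pos (by positivity), ENNReal.ofReal_add (by positivity) one_pos.le,
    ENNReal.ofReal_natCast, ENNReal.ofReal_one]

lemma two_rpow_ne_top (c : ℝ) : (2 : ℝ≥0∞) ^ c ≠ ∞ :=
  ENNReal.rpow_ne_top_of_ne_zero two_ne_zero ENNReal.ofNat_ne_top

lemma two_rpow_ne_zero (c : ℝ) : (2 : ℝ≥0∞) ^ c ≠ 0 :=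
  (ENNReal.rpow_pos two_pos ENNReal.ofNat_ne_top).ne'

lemma sq_rpow_half (x : ℝ≥0∞) : (x ^ 2) ^ (1 / 2 : ℝ) = x := by
  rw [← ENNReal.rpow_natCast_mul]
  norm_num

lemma rpow_le_two_rpow_abs_mul_rpow {x y : ℝ≥0∞} (hxy : x ≤ 2 * y) (hyx : y ≤ 2 * x) (c : ℝ) :
    x ^ c ≤ 2 ^ |c| * y ^ c := by
  rcases le_total 0 c with hc | hc
  · rw [abs_of_nonneg hc, ← ENNReal.mul_rpow_of_nonneg _ _ hc]
    exact ENNReal.rpow_le_rpow hxy hc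
  · have h : x⁻¹ ≤ 2 * y⁻¹ := by
      rw [← div_eq_mul_inv, ENNReal.le_div_iff_mul_le (by simp) (by simp), mul_comm,
        ← div_eq_mul_inv]
      exact ENNReal.div_le_of_le_mul hyx
    rw [abs_of_nonpos hc, ← neg_neg c, neg_neg (-c), ENNReal.rpow_neg x, ENNReal.rpow_neg y,
      ← ENNReal.inv_rpow, ← ENNReal.inv_rpow, ← ENNReal.mul_rpow_of_nonneg _ _ (neg_nonneg.2 hc)]
    exact ENNReal.rpow_le_rpow h (neg_nonneg.2 hc)

lemma iInf_pi_tsum_le {ι : Type*} [Countable ι] {α : ι → Type*} (g : ∀ i, α i → ℝ≥0∞) :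
    ⨅ f : ∀ i, α i, ∑' i, g i (f i) ≤ ∑' i, ⨅ a, g i a := by
  refine ENNReal.le_of_forall_pos_le_add fun ε hε hfin => ?_
  obtain ⟨δ, hδ, hδε⟩ := ENNReal.exists_pos_sum_of_countable' (ENNReal.coe_ne_zero.2 hε.ne') ι
  have hnear : ∀ i, ∃ a, g i a < (⨅ a, g i a) + δ i := fun i =>
    iInf_lt_iff.1 (ENNReal.lt_add_right (ENNReal.ne_top_of_tsum_ne_top hfin.ne i) (hδ i).ne')
  choose f hf using hnear
  calc ⨅ f : ∀ i, α i, ∑' i, g i (f i) ≤ ∑' i, g i (f i) := iInf_le _ f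
    _ ≤ ∑' i, ((⨅ a, g i a) + δ i) := ENNReal.tsum_le_tsum fun i => (hf i).le
    _ = ∑' i, (⨅ a, g i a) + ∑' i, δ i := ENNReal.tsum_add
    _ ≤ _ := by gcongr

lemma tendsto_of_tsum_mul_enorm_sub_ne_top {E : Type*} [SeminormedAddCommGroup E] {x : E}
    {y : ℕ → E} {w : ℕ → ℝ≥0∞} (hw : ∀ j, 1 ≤ w j) (h : ∑' j, w j * ‖x - y j‖ₑ ≠ ∞) :
    Filter.Tendsto y .atTop (nhds x) := by
  rw [tendsto_iff_edist_tendsto_0]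
  refine tendsto_of_tendsto_of_tendsto_of_le_of_le tendsto_const_nhds
    (ENNReal.tendsto_atTop_zero_of_tsum_ne_top h) (fun _ => zero_le) fun j => ?_
  rw [edist_comm, edist_eq_enorm_sub]
  exact le_mul_of_one_le_left' (hw j)

lemma eLpNorm_count_eq_tsum {q : ℝ≥0∞} (hq₀ : q ≠ 0) (hq : q ≠ ∞) (y : ℕ → ℝ≥0∞) :
    eLpNorm y q .count = (∑' n, y n ^ q.toReal) ^ (1 / q.toReal) := by
  simp only [eLpNorm_eq_lintegral_rpow_enorm_toReal hq₀ hq, lintegral_count, enorm_eq_self]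

lemma eLpNorm_count_top (y : ℕ → ℝ≥0∞) : eLpNorm y ∞ .count = ⨆ n, y n := by
  simp only [eLpNorm_exponent_top, eLpNormEssSup_count, enorm_eq_self]

lemma eLpNorm_count_le_mul {y z : ℕ → ℝ≥0∞} {C : ℝ≥0∞} (h : ∀ n, y n ≤ C * z n) (q : ℝ≥0∞) :
    eLpNorm y q .count ≤ C * eLpNorm z q .count :=
  eLpNorm_le_mul_eLpNorm_of_ae_le_mul'' q (Measurable.of_discrete.aestronglyMeasurable)
    (.of_forall h)

lemma natLog_two_add_one_eq_iff {m n : ℕ} :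
    Nat.log 2 (n + 1) = m ↔ n ∈ Finset.Ico (2 ^ m - 1) (2 ^ (m + 1) - 1) := by
  have := Nat.one_le_two_pow (n := m)
  have := Nat.one_le_two_pow (n := m + 1)
  rw [Nat.log_eq_iff (.inr ⟨one_lt_two, n.succ_ne_zero⟩), Finset.mem_Ico]
  omega

lemma encard_natLog_two_add_one_fiber (m : ℕ) :
    ((fun n : ℕ => Nat.log 2 (n + 1)) ⁻¹' {m}).encard = 2 ^ m := by
  have hfiber : (fun n : ℕ => Nat.log 2 (n + 1)) ⁻¹' {m} =
      Finset.Ico (2 ^ m - 1) (2 ^ (m + 1) - 1) :=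
    Set.ext fun _ => natLog_two_add_one_eq_iff
  have hcard : 2 ^ (m + 1) - 1 - (2 ^ m - 1) = 2 ^ m := by
    have := Nat.one_le_two_pow (n := m)
    omega
  rw [hfiber, Set.encard_coe_eq_coe_finsetCard, Nat.card_Ico, hcard]
  norm_cast

lemma tsum_comp_natLog_two_add_one (y : ℕ → ℝ≥0∞) :
    ∑' n, y (Nat.log 2 (n + 1)) = ∑' m, 2 ^ m * y m := by
  rw [← ENNReal.tsum_fiberwise _ fun n => Nat.log 2 (n + 1)]
  refine tsum_congr fun m => ?_
  calc ∑' n : (fun n : ℕ => Nat.log 2 (n + 1)) ⁻¹' {m}, y (Nat.log 2 (n + 1))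
      = ∑' _ : (fun n : ℕ => Nat.log 2 (n + 1)) ⁻¹' {m}, y m :=
        tsum_congr fun n => congrArg y n.2
    _ = 2 ^ m * y m := by
      rw [ENNReal.tsum_set_const, encard_natLog_two_add_one_fiber]
      norm_cast

lemma eLpNorm_comp_natLog_two_add_one (q : ℝ≥0∞) (y : ℕ → ℝ≥0∞) :
    eLpNorm (fun n => y (Nat.log 2 (n + 1))) q .count =
      eLpNorm (fun m : ℕ => 2 ^ (m / q.toReal) * y m) q .count := by
  rcases eq_or_ne q 0 with rfl | hq₀
  · simp only [eLpNorm_exponent_zero]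
  rcases eq_or_ne q ∞ with rfl | hq
  · have hsurj : (fun n : ℕ => Nat.log 2 (n + 1)).Surjective := fun m =>
      ⟨2 ^ m - 1, by simp only [Nat.sub_add_cancel Nat.one_le_two_pow, Nat.log_pow one_lt_two]⟩
    simp only [eLpNorm_count_top, ENNReal.toReal_top, _root_.div_zero, ENNReal.rpow_zero, one_mul]
    exact hsurj.iSup_comp y
  have hr := ENNReal.toReal_pos hq₀ hq
  rw [eLpNorm_count_eq_tsum hq₀ hq, eLpNorm_count_eq_tsum hq₀ hq,
    tsum_comp_natLog_two_add_one fun m => y m ^ q.toReal]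
  congr 2 with m
  rw [ENNReal.mul_rpow_of_nonneg _ _ hr.le, ← ENNReal.rpow_mul, div_mul_cancel₀ _ hr.ne',
    ENNReal.rpow_natCast]

lemma eLpNorm_comp_pred_le (q : ℝ≥0∞) (y : ℕ → ℝ≥0∞) :
    eLpNorm (fun m => y (m - 1)) q .count ≤ 2 ^ (1 / q.toReal) * eLpNorm y q .count := by
  rcases eq_or_ne q 0 with rfl | hq₀
  · simp only [eLpNorm_exponent_zero, zero_le]
  rcases eq_or_ne q ∞ with rfl | hq
  · simp only [eLpNorm_count_top, ENNReal.toReal_top, _root_.div_zero, ENNReal.rpow_zero, one_mul]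
    exact iSup_le fun m => le_iSup y (m - 1)
  have hr := ENNReal.toReal_pos hq₀ hq
  rw [eLpNorm_count_eq_tsum hq₀ hq, eLpNorm_count_eq_tsum hq₀ hq,
    ← ENNReal.mul_rpow_of_nonneg _ _ (by positivity)]
  gcongr
  rw [tsum_eq_zero_add' ENNReal.summable, two_mul]
  exact add_le_add_left (ENNReal.le_tsum (f := fun m => y m ^ q.toReal) 0) _

lemma tsum_sq_pow_mul_le_iSup (θ : ℝ≥0∞) (y : ℕ → ℝ≥0∞) :
    ∑' j, (θ ^ 2) ^ j * y j ≤ (1 - θ)⁻¹ * ⨆ j, θ ^ j * y j := by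
  rw [← ENNReal.tsum_geometric, ← ENNReal.tsum_mul_right]
  refine ENNReal.tsum_le_tsum fun j => ?_
  rw [pow_right_comm, sq, mul_assoc]
  gcongr
  exact le_iSup (fun j => θ ^ j * y j) j

lemma tsum_iSup_pow_mul_rpow_le (θ : ℝ≥0∞) {r : ℝ} (hr : 0 < r) (y : ℕ → ℝ≥0∞) :
    ∑' m, (⨆ j, θ ^ j * y (m + j)) ^ r ≤ (1 - θ ^ r)⁻¹ * ∑' m, y m ^ r := by
  calc ∑' m, (⨆ j, θ ^ j * y (m + j)) ^ r
      ≤ ∑' m, ∑' j, (θ ^ r) ^ j * y (m + j) ^ r := by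
        refine ENNReal.tsum_le_tsum fun m => ?_
        rw [← ENNReal.le_rpow_inv_iff hr]
        refine iSup_le fun j => ?_
        have hpow : (θ ^ j) ^ r = (θ ^ r) ^ j := by
          rw [← ENNReal.rpow_natCast_mul, mul_comm, ENNReal.rpow_mul_natCast]
        rw [ENNReal.le_rpow_inv_iff hr, ENNReal.mul_rpow_of_nonneg _ _ hr.le, hpow]
        exact ENNReal.le_tsum (f := fun j => (θ ^ r) ^ j * y (m + j) ^ r) j
    _ = ∑' j, (θ ^ r) ^ j * ∑' m, y (m + j) ^ r := by
        rw [ENNReal.tsum_comm]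
        simp only [ENNReal.tsum_mul_left]
    _ ≤ ∑' j, (θ ^ r) ^ j * ∑' m, y m ^ r := by
        exact ENNReal.tsum_le_tsum fun j => mul_le_mul_right
          (ENNReal.tsum_comp_le_tsum_of_injective (add_left_injective j) fun m => y m ^ r) _
    _ = (1 - θ ^ r)⁻¹ * ∑' m, y m ^ r := by
        rw [ENNReal.tsum_mul_right, ENNReal.tsum_geometric]

lemma exists_eLpNorm_iSup_pow_mul_le {θ : ℝ≥0∞} (hθ : θ < 1) (q : ℝ≥0∞) :
    ∃ C ≠ (∞ : ℝ≥0∞), ∀ y : ℕ → ℝ≥0∞,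
      eLpNorm (fun m => ⨆ j, θ ^ j * y (m + j)) q .count ≤ C * eLpNorm y q .count := by
  rcases eq_or_ne q 0 with rfl | hq₀
  · exact ⟨0, ENNReal.zero_ne_top, fun y => by simp only [eLpNorm_exponent_zero, zero_le]⟩
  rcases eq_or_ne q ∞ with rfl | hq
  · refine ⟨1, ENNReal.one_ne_top, fun y => ?_⟩
    simp only [eLpNorm_count_top, one_mul]
    exact iSup₂_le fun m j =>
      (mul_le_of_le_one_left' (pow_le_one' hθ.le j)).trans (le_iSup y (m + j))
  have hr := ENNReal.toReal_pos hq₀ hq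
  have hfin : (1 - θ ^ q.toReal)⁻¹ ≠ ∞ :=
    ENNReal.inv_ne_top.2 (tsub_pos_of_lt (ENNReal.rpow_lt_one hθ hr)).ne'
  refine ⟨((1 - θ ^ q.toReal)⁻¹) ^ (1 / q.toReal),
    ENNReal.rpow_ne_top_of_nonneg (by positivity) hfin, fun y => ?_⟩
  rw [eLpNorm_count_eq_tsum hq₀ hq, eLpNorm_count_eq_tsum hq₀ hq,
    ← ENNReal.mul_rpow_of_nonneg _ _ (by positivity)]
  gcongr
  exact tsum_iSup_pow_mul_rpow_le θ hr y

-- Half of the geometric decay is spent on replacing the sum by a supremum, which turns the triangle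
-- inequality of `ℓ_q`, unavailable for `q < 1`, into the trivial bound of a supremum by a sum.
lemma exists_eLpNorm_tsum_pow_mul_le {ρ : ℝ≥0∞} (hρ : ρ < 1) (q : ℝ≥0∞) :
    ∃ C ≠ (∞ : ℝ≥0∞), ∀ y : ℕ → ℝ≥0∞,
      eLpNorm (fun m => ∑' j, ρ ^ j * y (m + j)) q .count ≤ C * eLpNorm y q .count := by
  set θ := ρ ^ (1 / 2 : ℝ) with hθ_def
  have hθ : θ < 1 := ENNReal.rpow_lt_one hρ one_half_pos
  have hθρ : θ ^ 2 = ρ := by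
    rw [hθ_def, ← ENNReal.rpow_mul_natCast]
    norm_num
  obtain ⟨C, hC_top, hC⟩ := exists_eLpNorm_iSup_pow_mul_le hθ q
  have hfin : (1 - θ)⁻¹ ≠ ∞ := ENNReal.inv_ne_top.2 (tsub_pos_of_lt hθ).ne'
  refine ⟨(1 - θ)⁻¹ * C, ENNReal.mul_ne_top hfin hC_top, fun y => ?_⟩
  rw [mul_assoc]
  refine (eLpNorm_count_le_mul (fun m => ?_) q).trans (mul_le_mul_right (hC y) _)
  rw [← hθρ]
  exact tsum_sq_pow_mul_le_iSup θ fun j => y (m + j)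

/-! ### Dyadic form of the Lorentz quasinorm -/

/-- The dyadic form of the Lorentz quasinorm `ℓ_{p,q}`, sampling the sequence at `2 ^ m - 1`, that
is, at position `2 ^ m` when counting from `1`. -/
def dyadicLorentzNorm (p : ℝ) (q : ℝ≥0∞) (x : ℕ → ℝ≥0∞) : ℝ≥0∞ :=
  eLpNorm (fun m : ℕ => 2 ^ (m / p) * x (2 ^ m - 1)) q .count

-- For `q = ∞` the exponent is `1 / p`, since `1 / ∞.toReal = 1 / 0 = 0`.
lemma lorentzNorm_eq_eLpNorm (p : ℝ) {q : ℝ≥0∞} (hq : q ≠ 0) (x : ℕ → ℝ≥0∞) :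
    lorentzNorm p q x =
      eLpNorm (fun n : ℕ => ((n : ℝ≥0∞) + 1) ^ (1 / p - 1 / q.toReal) * x n) q .count := by
  simp only [lorentzNorm, ofReal_natCast_add_one_rpow]
  split_ifs with hq'
  · simp only [hq', eLpNorm_count_top, ENNReal.toReal_top, _root_.div_zero, sub_zero]
  · rw [eLpNorm_count_eq_tsum hq hq']

lemma two_pow_natLog_le_add_one (n : ℕ) : (2 : ℝ≥0∞) ^ Nat.log 2 (n + 1) ≤ n + 1 :=
  mod_cast Nat.pow_log_le_self 2 n.succ_ne_zero

lemma add_one_le_two_mul_two_pow_natLog (n : ℕ) : (n + 1 : ℝ≥0∞) ≤ 2 * 2 ^ Nat.log 2 (n + 1) := by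
  have h := (Nat.lt_pow_succ_log_self one_lt_two (n + 1)).le
  rw [pow_succ'] at h
  exact mod_cast h

lemma two_rpow_div_mul_two_rpow_natCast_mul (m : ℕ) (p r : ℝ) :
    (2 : ℝ≥0∞) ^ (m / r) * 2 ^ (m * (1 / p - 1 / r)) = 2 ^ (m / p) := by
  rw [← ENNReal.rpow_add _ _ two_ne_zero ENNReal.ofNat_ne_top]
  ring_nf

lemma lorentzNorm_le_dyadicLorentzNorm (p : ℝ) {q : ℝ≥0∞} (hq : q ≠ 0) {x : ℕ → ℝ≥0∞}
    (hx : Antitone x) :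
    lorentzNorm p q x ≤ 2 ^ |1 / p - 1 / q.toReal| * dyadicLorentzNorm p q x := by
  set c := 1 / p - 1 / q.toReal
  let y : ℕ → ℝ≥0∞ := fun m => 2 ^ (m * c) * x (2 ^ m - 1)
  have hblock : ∀ n : ℕ, ((n : ℝ≥0∞) + 1) ^ c * x n ≤ 2 ^ |c| * y (Nat.log 2 (n + 1)) := by
    intro n
    have hle : 2 ^ Nat.log 2 (n + 1) - 1 ≤ n :=
      (Finset.mem_Ico.1 (natLog_two_add_one_eq_iff.1 rfl)).1
    rw [← mul_assoc, ENNReal.rpow_natCast_mul]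
    exact mul_le_mul' (rpow_le_two_rpow_abs_mul_rpow (add_one_le_two_mul_two_pow_natLog n)
      ((two_pow_natLog_le_add_one n).trans (le_mul_of_one_le_left' one_le_two)) c) (hx hle)
  calc lorentzNorm p q x ≤ 2 ^ |c| * eLpNorm (fun n => y (Nat.log 2 (n + 1))) q .count := by
        rw [lorentzNorm_eq_eLpNorm p hq]
        exact eLpNorm_count_le_mul hblock q
    _ = 2 ^ |c| * dyadicLorentzNorm p q x := by
        rw [eLpNorm_comp_natLog_two_add_one, dyadicLorentzNorm]
        simp only [y, c, ← mul_assoc, two_rpow_div_mul_two_rpow_natCast_mul]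

lemma two_rpow_div_le_pred (p : ℝ) (m : ℕ) :
    (2 : ℝ≥0∞) ^ (m / p) ≤ 2 ^ |1 / p| * 2 ^ ((m - 1 : ℕ) / p) := by
  rw [div_eq_mul_one_div (m : ℝ), div_eq_mul_one_div ((m - 1 : ℕ) : ℝ),
    ENNReal.rpow_natCast_mul, ENNReal.rpow_natCast_mul]
  refine rpow_le_two_rpow_abs_mul_rpow ?_ ?_ _
  · rw [← pow_succ']
    exact pow_le_pow_right₀ one_le_two (by omega)
  · exact (pow_le_pow_right₀ one_le_two m.pred_le).trans (le_mul_of_one_le_left' one_le_two)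

lemma dyadicLorentzNorm_le_of_le_pred (p : ℝ) (q : ℝ≥0∞) {x w : ℕ → ℝ≥0∞}
    (h : ∀ m, x (2 ^ m - 1) ≤ w (m - 1)) :
    dyadicLorentzNorm p q x ≤ 2 ^ |1 / p| * (2 ^ (1 / q.toReal) *
      eLpNorm (fun m : ℕ => 2 ^ (m / p) * w m) q .count) := by
  refine (eLpNorm_count_le_mul (fun m => ?_) q).trans
    (mul_le_mul_right (eLpNorm_comp_pred_le q fun m : ℕ => 2 ^ (m / p) * w m) _)
  rw [← mul_assoc]
  exact mul_le_mul' (two_rpow_div_le_pred p m) (h m)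

-- A term of the `m`-th dyadic block is bounded below only by the last one, `x (2 ^ (m + 1) - 2)`,
-- which dominates the sample `x (2 ^ (m + 1) - 1)` of the next block; hence the shift by one.
lemma dyadicLorentzNorm_le_lorentzNorm (p : ℝ) {q : ℝ≥0∞} (hq : q ≠ 0)
    {x : ℕ → ℝ≥0∞} (hx : Antitone x) :
    dyadicLorentzNorm p q x ≤ 2 ^ |1 / p| * (2 ^ (1 / q.toReal) *
      (2 ^ |1 / p - 1 / q.toReal| * lorentzNorm p q x)) := by
  set c := 1 / p - 1 / q.toReal
  let y : ℕ → ℝ≥0∞ := fun m => 2 ^ (m * c) * x (2 ^ (m + 1) - 2)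
  have hblock : ∀ n : ℕ, y (Nat.log 2 (n + 1)) ≤ 2 ^ |c| * (((n : ℝ≥0∞) + 1) ^ c * x n) := by
    intro n
    have hle : n ≤ 2 ^ (Nat.log 2 (n + 1) + 1) - 2 :=
      Nat.le_sub_one_of_lt (Finset.mem_Ico.1 (natLog_two_add_one_eq_iff.1 rfl)).2
    rw [← mul_assoc]
    simp only [y, ENNReal.rpow_natCast_mul]
    exact mul_le_mul' (rpow_le_two_rpow_abs_mul_rpow
      ((two_pow_natLog_le_add_one n).trans (le_mul_of_one_le_left' one_le_two))
      (add_one_le_two_mul_two_pow_natLog n) c) (hx hle)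
  have hpred : ∀ m, x (2 ^ m - 1) ≤ x (2 ^ (m - 1 + 1) - 2) := by
    rintro (_ | m)
    · rfl
    · exact hx (Nat.sub_le_sub_left one_le_two _)
  refine (dyadicLorentzNorm_le_of_le_pred p q (w := fun m => x (2 ^ (m + 1) - 2)) hpred).trans ?_
  gcongr
  calc eLpNorm (fun m : ℕ => 2 ^ (m / p) * x (2 ^ (m + 1) - 2)) q .count
      = eLpNorm (fun n => y (Nat.log 2 (n + 1))) q .count := by
        rw [eLpNorm_comp_natLog_two_add_one]
        simp only [y, c, ← mul_assoc, two_rpow_div_mul_two_rpow_natCast_mul]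
    _ ≤ 2 ^ |c| * lorentzNorm p q x := by
        rw [lorentzNorm_eq_eLpNorm p hq]
        exact eLpNorm_count_le_mul hblock q

lemma exists_lorentzNorm_le_of_dyadicLorentzNorm_le (p : ℝ) {q : ℝ≥0∞} (hq : q ≠ 0)
    {K : ℝ≥0∞} (hK : K ≠ ∞) :
    ∃ C ≠ (∞ : ℝ≥0∞), ∀ x y : ℕ → ℝ≥0∞, Antitone x → Antitone y →
      dyadicLorentzNorm p q x ≤ K * dyadicLorentzNorm p q y →
        lorentzNorm p q x ≤ C * lorentzNorm p q y := by
  set c := |1 / p - 1 / q.toReal|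
  refine ⟨2 ^ c * (K * (2 ^ |1 / p| * (2 ^ (1 / q.toReal) * 2 ^ c))), by
    finiteness [two_rpow_ne_top c, two_rpow_ne_top |1 / p|, two_rpow_ne_top (1 / q.toReal)], ?_⟩
  intro x y hx hy h
  calc lorentzNorm p q x
      ≤ 2 ^ c * dyadicLorentzNorm p q x := lorentzNorm_le_dyadicLorentzNorm p hq hx
    _ ≤ 2 ^ c * (K * dyadicLorentzNorm p q y) := by gcongr
    _ ≤ 2 ^ c * (K * (2 ^ |1 / p| * (2 ^ (1 / q.toReal) * (2 ^ c * lorentzNorm p q y)))) := by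
        gcongr
        exact dyadicLorentzNorm_le_lorentzNorm p hq hy
    _ = _ := by simp only [mul_assoc]

lemma exists_lorentzNorm_le_of_two_mul_le (p : ℝ) {q : ℝ≥0∞} (hq : q ≠ 0) :
    ∃ C ≠ (∞ : ℝ≥0∞), ∀ x y : ℕ → ℝ≥0∞, Antitone x → Antitone y → (∀ n, x (2 * n) ≤ y n) →
      lorentzNorm p q x ≤ C * lorentzNorm p q y := by
  obtain ⟨C, hC_top, hC⟩ := exists_lorentzNorm_le_of_dyadicLorentzNorm_le p hq
    (ENNReal.mul_ne_top (two_rpow_ne_top |1 / p|) (two_rpow_ne_top (1 / q.toReal)))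
  refine ⟨C, hC_top, fun x y hx hy h => hC x y hx hy ?_⟩
  have hpred : ∀ m, x (2 ^ m - 1) ≤ y (2 ^ (m - 1) - 1) := by
    refine fun m => (hx ?_).trans (h (2 ^ (m - 1) - 1))
    rcases m with _ | m
    · rfl
    · rw [Nat.add_sub_cancel, pow_succ]
      omega
  rw [mul_assoc]
  exact dyadicLorentzNorm_le_of_le_pred p q (w := fun m => y (2 ^ m - 1)) hpred

lemma natCast_two_pow_sub_one_add_one_rpow_half (m : ℕ) :
    (((2 ^ m - 1 : ℕ) : ℝ≥0∞) + 1) ^ (1 / 2 : ℝ) = 2 ^ ((m : ℝ) / 2) := by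
  have h : ((2 ^ m - 1 : ℕ) : ℝ≥0∞) + 1 = 2 ^ m :=
    mod_cast Nat.sub_add_cancel (Nat.one_le_two_pow (n := m))
  rw [h, ← ENNReal.rpow_natCast_mul, mul_one_div]

lemma two_rpow_div_mul_two_rpow_half_add (p : ℝ) (m j : ℕ) :
    (2 : ℝ≥0∞) ^ (m / p) * (2 ^ ((m : ℝ) / 2))⁻¹ * 2 ^ (((m + j : ℕ) : ℝ) / 2) =
      (2 ^ (1 / 2 - 1 / p)) ^ j * 2 ^ (((m + j : ℕ) : ℝ) / p) := by
  simp only [← ENNReal.rpow_neg, ← ENNReal.rpow_mul_natCast,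
    ← ENNReal.rpow_add _ _ two_ne_zero ENNReal.ofNat_ne_top]
  push_cast
  ring_nf

lemma exists_lorentzNorm_div_sqrt_le {p : ℝ} (hp₀ : 0 < p) (hp₂ : p < 2) {q : ℝ≥0∞} (hq : q ≠ 0)
    {K : ℝ≥0∞} (hK : K ≠ ∞) :
    ∃ C ≠ (∞ : ℝ≥0∞), ∀ x y : ℕ → ℝ≥0∞, Antitone x → Antitone y →
      (∀ m : ℕ, x (2 ^ m - 1) ≤ K * ∑' j : ℕ, 2 ^ (((m + j : ℕ) : ℝ) / 2) * y (2 ^ (m + j) - 1)) →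
        lorentzNorm p q (fun n => x n / ((n : ℝ≥0∞) + 1) ^ (1 / 2 : ℝ)) ≤
          C * lorentzNorm p q y := by
  have hρ : (2 : ℝ≥0∞) ^ (1 / 2 - 1 / p) < 1 :=
    ENNReal.rpow_lt_one_of_one_lt_of_neg ENNReal.one_lt_two
      (sub_neg.2 (one_div_lt_one_div_of_lt hp₀ hp₂))
  obtain ⟨A, hA_top, hA⟩ := exists_eLpNorm_tsum_pow_mul_le hρ q
  obtain ⟨C, hC_top, hC⟩ := exists_lorentzNorm_le_of_dyadicLorentzNorm_le p hq
    (ENNReal.mul_ne_top hK hA_top)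
  refine ⟨C, hC_top, fun x y hx hy h => hC _ y (fun a b hab => ?_) hy ?_⟩
  · gcongr
    exact hx hab
  rw [mul_assoc]
  refine (eLpNorm_count_le_mul (fun m => ?_) q).trans
    (mul_le_mul_right (hA fun m => 2 ^ (m / p) * y (2 ^ m - 1)) _)
  calc (2 : ℝ≥0∞) ^ (m / p) * (x (2 ^ m - 1) / (((2 ^ m - 1 : ℕ) : ℝ≥0∞) + 1) ^ (1 / 2 : ℝ))
      = 2 ^ (m / p) * (2 ^ ((m : ℝ) / 2))⁻¹ * x (2 ^ m - 1) := by
        rw [natCast_two_pow_sub_one_add_one_rpow_half, ENNReal.div_eq_inv_mul, mul_assoc]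
    _ ≤ 2 ^ (m / p) * (2 ^ ((m : ℝ) / 2))⁻¹ *
          (K * ∑' j : ℕ, 2 ^ (((m + j : ℕ) : ℝ) / 2) * y (2 ^ (m + j) - 1)) := by
        gcongr
        exact h m
    _ = K * ∑' j, (2 ^ (1 / 2 - 1 / p)) ^ j *
          (2 ^ (((m + j : ℕ) : ℝ) / p) * y (2 ^ (m + j) - 1)) := by
        simp only [mul_left_comm _ K, ← ENNReal.tsum_mul_left, ← mul_assoc,
          two_rpow_div_mul_two_rpow_half_add]

/-! ### Orthonormal systems and operators of finite rank -/

section HilbertSpace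

variable {𝕜 E F ι κ : Type*} [RCLike 𝕜]
  [NormedAddCommGroup E] [InnerProductSpace 𝕜 E] [NormedAddCommGroup F] [InnerProductSpace 𝕜 F]

lemma completeSpace_of_hilbertBasis (e : HilbertBasis ι 𝕜 E) : CompleteSpace E :=
  e.repr.toIsometryEquiv.completeSpace

lemma tsum_enorm_inner_sq (e : HilbertBasis ι 𝕜 E) (x : E) :
    ∑' i, ‖inner 𝕜 (e i) x‖ₑ ^ 2 = ‖x‖ₑ ^ 2 := by
  have h : HasSum (fun i => ‖inner 𝕜 (e i) x‖ ^ 2) (‖x‖ ^ 2) := by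
    simpa [HilbertBasis.repr_apply_apply] using
      lp.hasSum_norm (p := 2) (by norm_num) (e.repr x)
  simp only [← ofReal_norm, ← ENNReal.ofReal_pow (norm_nonneg _), ← h.tsum_eq,
    ENNReal.ofReal_tsum_of_nonneg (fun _ => sq_nonneg _) h.summable]

lemma tsum_enorm_inner_sq_le {v : ι → E} (hv : Orthonormal 𝕜 v) (x : E) :
    ∑' i, ‖inner 𝕜 (v i) x‖ₑ ^ 2 ≤ ‖x‖ₑ ^ 2 := by
  simp only [← ofReal_norm, ← ENNReal.ofReal_pow (norm_nonneg _),
    ← ENNReal.ofReal_tsum_of_nonneg (fun _ => sq_nonneg _) (hv.inner_products_summable x)]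
  exact ENNReal.ofReal_le_ofReal (hv.tsum_inner_products_le x)

lemma tsum_enorm_apply_sq_le_adjoint [CompleteSpace E] [CompleteSpace F] (S : E →L[𝕜] F)
    {v : κ → E} (hv : Orthonormal 𝕜 v) (g : HilbertBasis ι 𝕜 F) :
    ∑' k, ‖S (v k)‖ₑ ^ 2 ≤ ∑' i, ‖S.adjoint (g i)‖ₑ ^ 2 := by
  have hinner : ∀ i k, ‖inner 𝕜 (g i) (S (v k))‖ₑ = ‖inner 𝕜 (v k) (S.adjoint (g i))‖ₑ := by
    intro i k
    rw [ContinuousLinearMap.adjoint_inner_right, ← ofReal_norm, norm_inner_symm, ofReal_norm]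
  calc ∑' k, ‖S (v k)‖ₑ ^ 2
      = ∑' i, ∑' k, ‖inner 𝕜 (v k) (S.adjoint (g i))‖ₑ ^ 2 := by
        simp only [← tsum_enorm_inner_sq g, hinner]
        exact ENNReal.tsum_comm
    _ ≤ ∑' i, ‖S.adjoint (g i)‖ₑ ^ 2 :=
        ENNReal.tsum_le_tsum fun i => tsum_enorm_inner_sq_le hv _

lemma tsum_enorm_apply_sq_le_of_hilbertBasis (S : E →L[𝕜] E) {v : κ → E} (hv : Orthonormal 𝕜 v)
    (e : HilbertBasis ι 𝕜 E) : ∑' k, ‖S (v k)‖ₑ ^ 2 ≤ ∑' i, ‖S (e i)‖ₑ ^ 2 := by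
  have := completeSpace_of_hilbertBasis e
  calc ∑' k, ‖S (v k)‖ₑ ^ 2 ≤ ∑' i, ‖S.adjoint (e i)‖ₑ ^ 2 := tsum_enorm_apply_sq_le_adjoint S hv e
    _ ≤ ∑' i, ‖S.adjoint.adjoint (e i)‖ₑ ^ 2 :=
        tsum_enorm_apply_sq_le_adjoint S.adjoint e.orthonormal e
    _ = ∑' i, ‖S (e i)‖ₑ ^ 2 := by rw [ContinuousLinearMap.adjoint_adjoint]

lemma tsum_enorm_apply_sq_le_finrank_mul [CompleteSpace E] [FiniteDimensional 𝕜 F] (S : E →L[𝕜] F)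
    {v : κ → E} (hv : Orthonormal 𝕜 v) :
    ∑' k, ‖S (v k)‖ₑ ^ 2 ≤ Module.finrank 𝕜 F * ‖S‖ₑ ^ 2 := by
  have := FiniteDimensional.complete 𝕜 F
  let g := stdOrthonormalBasis 𝕜 F
  have hle : ∀ i, ‖S.adjoint (g i)‖ₑ ≤ ‖S‖ₑ := by
    intro i
    have h := S.adjoint.le_opNorm (g i)
    rw [g.norm_eq_one, mul_one, LinearIsometryEquiv.norm_map] at h
    rw [← ofReal_norm, ← ofReal_norm]
    exact ENNReal.ofReal_le_ofReal h
  calc ∑' k, ‖S (v k)‖ₑ ^ 2 ≤ ∑' i, ‖S.adjoint (g i)‖ₑ ^ 2 := by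
        simpa only [OrthonormalBasis.coe_toHilbertBasis] using
          tsum_enorm_apply_sq_le_adjoint S hv g.toHilbertBasis
    _ ≤ ∑' _ : Fin (Module.finrank 𝕜 F), ‖S‖ₑ ^ 2 :=
        ENNReal.tsum_le_tsum fun i => pow_le_pow_left' (hle i) 2
    _ = Module.finrank 𝕜 F * ‖S‖ₑ ^ 2 := by
        rw [tsum_fintype, Finset.sum_const, Finset.card_fin, nsmul_eq_mul]

lemma exists_mem_orthogonal_lt_norm_apply (S : E →L[𝕜] F) (V : Submodule 𝕜 E)
    [V.HasOrthogonalProjection] {c : ℝ} (hc : 0 ≤ c) (h : c < ‖S - S ∘L V.starProjection‖) :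
    ∃ y ∈ Vᗮ, ‖y‖ = 1 ∧ c < ‖S y‖ := by
  obtain ⟨x, hx, hcx⟩ := ContinuousLinearMap.exists_lt_apply_of_lt_opNorm _ h
  set y := x - V.starProjection x with hy
  have hyV : y ∈ Vᗮ := Submodule.sub_starProjection_mem_orthogonal x
  have hSy : c < ‖S y‖ := by simpa [hy] using hcx
  have hy_le : ‖y‖ ≤ 1 := by
    have hyx : Vᗮ.starProjection x = y := by
      rw [Submodule.starProjection_orthogonal, hy]
      rfl
    exact hyx ▸ (Submodule.norm_starProjection_apply_le Vᗮ x).trans hx.le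
  have hy_pos : 0 < ‖y‖ := by
    refine norm_pos_iff.2 fun hy₀ => ?_
    rw [hy₀, map_zero, norm_zero] at hSy
    exact hc.not_gt hSy
  refine ⟨((‖y‖⁻¹ : ℝ) : 𝕜) • y, Vᗮ.smul_mem _ hyV, ?_, ?_⟩
  · rw [norm_smul, RCLike.norm_ofReal, abs_of_pos (inv_pos.2 hy_pos), inv_mul_cancel₀ hy_pos.ne']
  · rw [map_smul, norm_smul, RCLike.norm_ofReal, abs_of_pos (inv_pos.2 hy_pos)]
    exact hSy.trans_le (le_mul_of_one_le_left (norm_nonneg _) ((one_le_inv₀ hy_pos).2 hy_le))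

end HilbertSpace

section RankLE

variable {𝕜 E : Type*} [RCLike 𝕜] [NormedAddCommGroup E] [InnerProductSpace 𝕜 E]

/-- The bounded operators of rank at most `n`, over which approximation numbers are infima. -/
def rankLE (𝕜 E : Type*) [RCLike 𝕜] [NormedAddCommGroup E] [InnerProductSpace 𝕜 E] (n : ℕ) :
    Set (E →L[𝕜] E) :=
  {R | R.toLinearMap.rank ≤ n}

lemma mem_rankLE_iff {R : E →L[𝕜] E} {n : ℕ} : R ∈ rankLE 𝕜 E n ↔ R.toLinearMap.rank ≤ n :=
  Iff.rfl

instance nonempty_rankLE (n : ℕ) : Nonempty (rankLE 𝕜 E n) :=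
  ⟨0, by simp [mem_rankLE_iff]⟩

lemma rankLE_mono : Monotone (rankLE 𝕜 E) :=
  fun _ _ hmn _ hR => mem_rankLE_iff.2 ((mem_rankLE_iff.1 hR).trans (Nat.cast_le.2 hmn))

lemma add_mem_rankLE {A B : E →L[𝕜] E} {m n : ℕ} (hA : A ∈ rankLE 𝕜 E m) (hB : B ∈ rankLE 𝕜 E n) :
    A + B ∈ rankLE 𝕜 E (m + n) := by
  refine (LinearMap.rank_add_le A.toLinearMap B.toLinearMap).trans ?_
  rw [Nat.cast_add]
  exact add_le_add hA hB

lemma sub_mem_rankLE {A B : E →L[𝕜] E} {m n : ℕ} (hA : A ∈ rankLE 𝕜 E m) (hB : B ∈ rankLE 𝕜 E n) :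
    A - B ∈ rankLE 𝕜 E (m + n) := by
  rw [sub_eq_add_neg]
  refine add_mem_rankLE hA ?_
  rwa [mem_rankLE_iff, ContinuousLinearMap.toLinearMap_neg, LinearMap.rank,
    LinearMap.range_neg]

lemma comp_starProjection_mem_rankLE (S : E →L[𝕜] E) {V : Submodule 𝕜 E} [FiniteDimensional 𝕜 V]
    {n : ℕ} (hV : Module.finrank 𝕜 V ≤ n) : S ∘L V.starProjection ∈ rankLE 𝕜 E n := by
  refine (LinearMap.rank_comp_le_right V.starProjection.toLinearMap S.toLinearMap).trans ?_
  rw [LinearMap.rank, Submodule.range_starProjection, ← Module.finrank_eq_rank]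
  exact mod_cast hV

lemma exists_orthonormal_lt_norm_apply (S : E →L[𝕜] E) {c : ℝ} (hc : 0 ≤ c) {n : ℕ}
    (h : ∀ R ∈ rankLE 𝕜 E n, c < ‖S - R‖) :
    ∀ k ≤ n + 1, ∃ v : Fin k → E, Orthonormal 𝕜 v ∧ ∀ i, c < ‖S (v i)‖ := by
  intro k hk
  induction k with
  | zero => exact ⟨Fin.elim0, ⟨(Fin.elim0 ·), fun i => i.elim0⟩, (Fin.elim0 ·)⟩
  | succ k ih =>
    obtain ⟨v, hv, hcv⟩ := ih (Nat.le_of_succ_le hk)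
    let V := Submodule.span 𝕜 (Set.range v)
    have : FiniteDimensional 𝕜 V := .span_of_finite 𝕜 (Set.finite_range v)
    have hV : Module.finrank 𝕜 V ≤ n := by
      rw [finrank_span_eq_card hv.linearIndependent, Fintype.card_fin]
      exact Nat.le_of_succ_le_succ hk
    obtain ⟨y, hyV, hy, hcy⟩ := exists_mem_orthogonal_lt_norm_apply S V hc
      (h _ (comp_starProjection_mem_rankLE S hV))
    refine ⟨Matrix.vecCons y v, orthonormal_vecCons_iff.2 ⟨hy, fun i => ?_, hv⟩, ?_⟩
    · exact (Submodule.mem_orthogonal' V y).1 hyV _ (Submodule.subset_span ⟨i, rfl⟩)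
    · exact Fin.cases hcy hcv

end RankLE

/-! ### Operator norm and Hilbert–Schmidt approximation numbers -/

section ApproximationNumbers

variable {ι H : Type*} [NormedAddCommGroup H] [InnerProductSpace ℂ H]

lemma ofReal_singVal (T : H →L[ℂ] H) (n : ℕ) :
    ENNReal.ofReal (singVal T n) = ⨅ R : rankLE ℂ H n, ‖T - R‖ₑ := by
  have h : singVal T n = ⨅ R : rankLE ℂ H n, ‖T - R‖ := by
    simp [singVal, iInf, Set.range, rankLE, eq_comm]
  simp only [h, ENNReal.ofReal_iInf, ofReal_norm]

lemma ofReal_singVal_le (T : H →L[ℂ] H) {R : H →L[ℂ] H} {n : ℕ} (hR : R ∈ rankLE ℂ H n) :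
    ENNReal.ofReal (singVal T n) ≤ ‖T - R‖ₑ :=
  (ofReal_singVal T n).trans_le (iInf_le (fun R : rankLE ℂ H n => ‖T - R‖ₑ) ⟨R, hR⟩)

lemma hsApprox_le (e : HilbertBasis ι ℂ H) (T : H →L[ℂ] H) {R : H →L[ℂ] H} {n : ℕ}
    (hR : R ∈ rankLE ℂ H n) : hsApprox e T n ≤ hsNorm e (T - R) :=
  iInf₂_le R hR

lemma antitone_ofReal_singVal (T : H →L[ℂ] H) :
    Antitone fun n => ENNReal.ofReal (singVal T n) := by
  intro m n hmn
  simp only [ofReal_singVal T m]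
  exact le_iInf fun R => ofReal_singVal_le T (rankLE_mono hmn R.2)

lemma antitone_hsApprox (e : HilbertBasis ι ℂ H) (T : H →L[ℂ] H) : Antitone (hsApprox e T) :=
  fun _ _ hmn => le_iInf₂ fun _ hR => hsApprox_le e T (rankLE_mono hmn hR)

lemma hsNorm_eq (e : HilbertBasis ι ℂ H) (T : H →L[ℂ] H) :
    hsNorm e T = (∑' i, ‖T (e i)‖ₑ ^ 2) ^ (1 / 2 : ℝ) := by
  simp only [hsNorm, ENNReal.ofReal_pow (norm_nonneg _), ofReal_norm]

lemma ofReal_singVal_le_hsNorm_div (e : HilbertBasis ι ℂ H) (S : H →L[ℂ] H) (n : ℕ) :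
    ENNReal.ofReal (singVal S n) ≤ hsNorm e S / ((n : ℝ≥0∞) + 1) ^ (1 / 2 : ℝ) := by
  refine ENNReal.le_of_forall_nnreal_lt fun c hc => ?_
  have hlt : ∀ R ∈ rankLE ℂ H n, (c : ℝ) < ‖S - R‖ := by
    intro R hR
    have h : (c : ℝ≥0∞) < ‖S - R‖₊ := hc.trans_le (ofReal_singVal_le S hR)
    exact_mod_cast h
  obtain ⟨v, hv, hcv⟩ := exists_orthonormal_lt_norm_apply S c.2 hlt (n + 1) le_rfl
  have hcv' : ∀ i, (c : ℝ≥0∞) ≤ ‖S (v i)‖ₑ := fun i => ENNReal.coe_le_coe.2 (hcv i).le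
  rw [ENNReal.le_div_iff_mul_le (.inl (by simp)) (.inl (by finiteness))]
  calc c * ((n : ℝ≥0∞) + 1) ^ (1 / 2 : ℝ)
      = (∑' _ : Fin (n + 1), (c : ℝ≥0∞) ^ 2) ^ (1 / 2 : ℝ) := by
        rw [tsum_fintype, Finset.sum_const, Finset.card_fin, nsmul_eq_mul,
          ENNReal.mul_rpow_of_nonneg _ _ one_half_pos.le, sq_rpow_half, mul_comm, Nat.cast_succ]
    _ ≤ (∑' i, ‖S (v i)‖ₑ ^ 2) ^ (1 / 2 : ℝ) := by
        gcongr with i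
        exact hcv' i
    _ ≤ hsNorm e S := by
        rw [hsNorm_eq]
        gcongr
        exact tsum_enorm_apply_sq_le_of_hilbertBasis S hv e

lemma ofReal_singVal_two_mul_le (e : HilbertBasis ι ℂ H) (T : H →L[ℂ] H) (n : ℕ) :
    ENNReal.ofReal (singVal T (2 * n)) ≤ hsApprox e T n / ((n : ℝ≥0∞) + 1) ^ (1 / 2 : ℝ) := by
  rw [ENNReal.le_div_iff_mul_le (.inl (by simp)) (.inl (by finiteness))]
  refine le_iInf₂ fun R hR => ?_
  rw [← ENNReal.le_div_iff_mul_le (.inl (by simp)) (.inl (by finiteness))]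
  refine le_trans ?_ (ofReal_singVal_le_hsNorm_div e (T - R) n)
  rw [ofReal_singVal (T - R), two_mul]
  refine le_iInf fun Q => ?_
  rw [sub_sub]
  exact ofReal_singVal_le T (add_mem_rankLE hR Q.2)

lemma hsNorm_le_of_mem_rankLE (e : HilbertBasis ι ℂ H) {A : H →L[ℂ] H} {k : ℕ}
    (hA : A ∈ rankLE ℂ H k) : hsNorm e A ≤ (k : ℝ≥0∞) ^ (1 / 2 : ℝ) * ‖A‖ₑ := by
  have := completeSpace_of_hilbertBasis e
  have hfin : FiniteDimensional ℂ A.range :=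
    Module.rank_lt_aleph0_iff.1 (lt_of_le_of_lt hA Cardinal.natCast_lt_aleph0)
  have hk : Module.finrank ℂ A.range ≤ k := Module.finrank_le_of_rank_le hA
  have hnorm : ‖A.rangeRestrict‖ₑ ≤ ‖A‖ₑ := by
    rw [← ofReal_norm, ← ofReal_norm]
    exact ENNReal.ofReal_le_ofReal
      (ContinuousLinearMap.opNorm_le_bound _ (norm_nonneg A) fun x => A.le_opNorm x)
  have hsq : ∑' i, ‖A (e i)‖ₑ ^ 2 ≤ k * ‖A‖ₑ ^ 2 :=
    calc ∑' i, ‖A.rangeRestrict (e i)‖ₑ ^ 2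
        ≤ Module.finrank ℂ A.range * ‖A.rangeRestrict‖ₑ ^ 2 :=
          tsum_enorm_apply_sq_le_finrank_mul A.rangeRestrict e.orthonormal
      _ ≤ k * ‖A‖ₑ ^ 2 := by gcongr
  rw [hsNorm_eq, ← sq_rpow_half ‖A‖ₑ, ← ENNReal.mul_rpow_of_nonneg _ _ one_half_pos.le]
  gcongr

lemma hsNorm_eq_iSup (e : HilbertBasis ι ℂ H) (A : H →L[ℂ] H) :
    hsNorm e A = ⨆ s : Finset ι, ‖WithLp.toLp 2 fun i : s => A (e i)‖ₑ := by
  have hsum : ∀ s : Finset ι,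
      ‖WithLp.toLp 2 fun i : s => A (e i)‖ₑ = (∑ i ∈ s, ‖A (e i)‖ₑ ^ 2) ^ (1 / 2 : ℝ) := by
    intro s
    rw [← sq_rpow_half ‖_‖ₑ, ← ofReal_norm, ← ENNReal.ofReal_pow (norm_nonneg _),
      PiLp.norm_sq_eq_of_L2, ENNReal.ofReal_sum_of_nonneg fun _ _ => sq_nonneg _]
    simp only [ENNReal.ofReal_pow (norm_nonneg _), ofReal_norm]
    rw [Finset.sum_coe_sort s fun i => ‖A (e i)‖ₑ ^ 2]
  simp only [hsum, hsNorm_eq, ENNReal.tsum_eq_iSup_sum]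
  exact (ENNReal.orderIsoRpow (1 / 2) one_half_pos).map_iSup _

lemma hsNorm_sub_le_tsum_of_tendsto (e : HilbertBasis ι ℂ H) {T : H →L[ℂ] H} {R : ℕ → H →L[ℂ] H}
    (hR : Filter.Tendsto R .atTop (nhds T)) :
    hsNorm e (T - R 0) ≤ ∑' j, hsNorm e (R (j + 1) - R j) := by
  rw [hsNorm_eq_iSup]
  refine iSup_le fun s => ?_
  let Φ : (H →L[ℂ] H) → PiLp 2 fun _ : s => H := fun A => WithLp.toLp 2 fun i => A (e i)
  have hΦ : Continuous Φ := by fun_prop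
  have hedist : ∀ A B, edist (Φ A) (Φ B) = ‖Φ (B - A)‖ₑ := by
    intro A B
    rw [edist_comm, edist_eq_enorm_sub]
    rfl
  have h := edist_le_tsum_of_edist_le_of_tendsto₀ (fun j => hsNorm e (R (j + 1) - R j))
    (fun j => ?_) ((hΦ.tendsto T).comp hR)
  · rwa [Function.comp_apply, hedist] at h
  · simp only [Function.comp_apply, hedist, hsNorm_eq_iSup]
    exact le_iSup (fun s : Finset ι => ‖WithLp.toLp 2 fun i : s => (R (j + 1) - R j) (e i)‖ₑ) s

lemma hsNorm_sub_le_of_mem_rankLE_two_pow (e : HilbertBasis ι ℂ H) (T : H →L[ℂ] H)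
    {A B : H →L[ℂ] H} {m : ℕ} (hA : A ∈ rankLE ℂ H (2 ^ (m + 1) - 1))
    (hB : B ∈ rankLE ℂ H (2 ^ m - 1)) :
    hsNorm e (A - B) ≤
      2 * (2 ^ ((m : ℝ) / 2) * ‖T - B‖ₑ + 2 ^ (((m + 1 : ℕ) : ℝ) / 2) * ‖T - A‖ₑ) := by
  have hrank : A - B ∈ rankLE ℂ H (2 ^ (m + 2)) := by
    refine rankLE_mono ?_ (sub_mem_rankLE hA hB)
    rw [pow_succ, pow_add]
    omega
  have hweight : ((2 ^ (m + 2) : ℕ) : ℝ≥0∞) ^ (1 / 2 : ℝ) = 2 * 2 ^ ((m : ℝ) / 2) := by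
    rw [pow_add, Nat.cast_mul, ENNReal.mul_rpow_of_nonneg _ _ one_half_pos.le, Nat.cast_pow,
      Nat.cast_pow, Nat.cast_ofNat, sq_rpow_half, ← ENNReal.rpow_natCast_mul, mul_one_div, mul_comm]
  have htri : ‖A - B‖ₑ ≤ ‖T - B‖ₑ + ‖T - A‖ₑ := by
    rw [← sub_sub_sub_cancel_left B A T]
    exact enorm_sub_le
  calc hsNorm e (A - B) ≤ 2 * 2 ^ ((m : ℝ) / 2) * ‖A - B‖ₑ :=
        hweight ▸ hsNorm_le_of_mem_rankLE e hrank
    _ ≤ 2 * 2 ^ ((m : ℝ) / 2) * (‖T - B‖ₑ + ‖T - A‖ₑ) := by gcongr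
    _ ≤ _ := by
        rw [mul_assoc, mul_add]
        gcongr
        · exact one_le_two
        · exact m.le_succ

lemma hsApprox_le_tsum_enorm_sub (e : HilbertBasis ι ℂ H) (T : H →L[ℂ] H) (m : ℕ)
    {R : ℕ → H →L[ℂ] H} (hR : ∀ j, R j ∈ rankLE ℂ H (2 ^ (m + j) - 1)) :
    hsApprox e T (2 ^ m - 1) ≤ 4 * ∑' j : ℕ, 2 ^ (((m + j : ℕ) : ℝ) / 2) * ‖T - R j‖ₑ := by
  set a : ℕ → ℝ≥0∞ := fun j => 2 ^ (((m + j : ℕ) : ℝ) / 2) * ‖T - R j‖ₑ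
  by_cases htop : ∑' j, a j = ∞
  · rw [htop, ENNReal.mul_top four_ne_zero]
    exact le_top
  have hlim : Filter.Tendsto R .atTop (nhds T) :=
    tendsto_of_tsum_mul_enorm_sub_ne_top
      (fun j => ENNReal.rpow_zero (x := 2).symm.trans_le
        (ENNReal.rpow_le_rpow_of_exponent_le one_le_two (by positivity))) htop
  calc hsApprox e T (2 ^ m - 1) ≤ hsNorm e (T - R 0) := hsApprox_le e T (hR 0)
    _ ≤ ∑' j, hsNorm e (R (j + 1) - R j) := hsNorm_sub_le_tsum_of_tendsto e hlim
    _ ≤ ∑' j, 2 * (a j + a (j + 1)) :=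
        ENNReal.tsum_le_tsum fun j => hsNorm_sub_le_of_mem_rankLE_two_pow e T (hR (j + 1)) (hR j)
    _ = 2 * (∑' j, a j + ∑' j, a (j + 1)) := by rw [ENNReal.tsum_mul_left, ENNReal.tsum_add]
    _ ≤ 2 * (∑' j, a j + ∑' j, a j) := by
        exact mul_le_mul_right (add_le_add_right
          (ENNReal.tsum_comp_le_tsum_of_injective (add_left_injective 1) a) _) _
    _ = 4 * ∑' j, a j := by ring

lemma hsApprox_le_tsum_singVal (e : HilbertBasis ι ℂ H) (T : H →L[ℂ] H) (m : ℕ) :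
    hsApprox e T (2 ^ m - 1) ≤ 4 * ∑' j : ℕ,
      2 ^ (((m + j : ℕ) : ℝ) / 2) * ENNReal.ofReal (singVal T (2 ^ (m + j) - 1)) := by
  calc hsApprox e T (2 ^ m - 1)
      ≤ ⨅ R : ∀ j : ℕ, rankLE ℂ H (2 ^ (m + j) - 1),
          4 * ∑' j : ℕ, 2 ^ (((m + j : ℕ) : ℝ) / 2) * ‖T - R j‖ₑ :=
        le_iInf fun R => hsApprox_le_tsum_enorm_sub e T m fun j => (R j).2
    _ = 4 * ⨅ R : ∀ j : ℕ, rankLE ℂ H (2 ^ (m + j) - 1),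
          ∑' j : ℕ, 2 ^ (((m + j : ℕ) : ℝ) / 2) * ‖T - R j‖ₑ :=
        (ENNReal.mul_iInf_of_ne four_ne_zero ENNReal.ofNat_ne_top).symm
    _ ≤ 4 * ∑' j : ℕ, ⨅ R : rankLE ℂ H (2 ^ (m + j) - 1),
          2 ^ (((m + j : ℕ) : ℝ) / 2) * ‖T - R‖ₑ := by
        gcongr
        exact iInf_pi_tsum_le fun j (R : rankLE ℂ H (2 ^ (m + j) - 1)) =>
          2 ^ (((m + j : ℕ) : ℝ) / 2) * ‖T - R‖ₑ
    _ = _ := by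
        simp only [ofReal_singVal,
          ENNReal.mul_iInf_of_ne (two_rpow_ne_zero _) (two_rpow_ne_top _)]

end ApproximationNumbers

theorem lorentz_ideal_equiv_hsApprox_general {p : ℝ} (hp₀ : 0 < p) (hp₂ : p < 2)
    {q : ℝ≥0∞} (hq : 0 < q) :
    ∃ C : ℝ, 1 ≤ C ∧
      ∀ {H ι : Type*} [NormedAddCommGroup H] [InnerProductSpace ℂ H] (e : HilbertBasis ι ℂ H)
        (T : H →L[ℂ] H),
        lorentzNorm p q (fun n => ENNReal.ofReal (singVal T n)) ≤
            ENNReal.ofReal C *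
              lorentzNorm p q
                (fun n => hsApprox e T n / ENNReal.ofReal (((n : ℝ) + 1) ^ (1 / 2 : ℝ))) ∧
          lorentzNorm p q
              (fun n => hsApprox e T n / ENNReal.ofReal (((n : ℝ) + 1) ^ (1 / 2 : ℝ))) ≤
            ENNReal.ofReal C * lorentzNorm p q (fun n => ENNReal.ofReal (singVal T n)) := by
  obtain ⟨C₁, hC₁_top, hC₁⟩ := exists_lorentzNorm_le_of_two_mul_le p hq.ne'
  obtain ⟨C₂, hC₂_top, hC₂⟩ :=
    exists_lorentzNorm_div_sqrt_le hp₀ hp₂ hq.ne' (K := 4) ENNReal.ofNat_ne_top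
  set C := max 1 (max C₁.toReal C₂.toReal)
  have hle₁ : C₁ ≤ ENNReal.ofReal C :=
    ENNReal.le_ofReal_iff_toReal_le hC₁_top (by positivity) |>.2 (by simp [C])
  have hle₂ : C₂ ≤ ENNReal.ofReal C :=
    ENNReal.le_ofReal_iff_toReal_le hC₂_top (by positivity) |>.2 (by simp [C])
  refine ⟨C, le_max_left _ _, fun {H ι} _ _ e T => ?_⟩
  simp only [ofReal_natCast_add_one_rpow]
  have hμ := antitone_ofReal_singVal T
  have hE := antitone_hsApprox e T
  constructor
  · refine (hC₁ _ _ hμ (fun m n hmn => ?_) (ofReal_singVal_two_mul_le e T)).trans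
      (mul_le_mul_left hle₁ _)
    gcongr
    exact hE hmn
  · exact (hC₂ _ _ hE hμ (hsApprox_le_tsum_singVal e T)).trans (mul_le_mul_left hle₂ _)

/-- For compact `T`, `0 < p < 2`, `0 < q ≤ ∞`:
`‖T‖_{L_{p,q}} ≈ ‖(e(n,T)/(n+1)^{1/2})_n‖_{ℓ_{p,q}}`, constants depending only on `p, q`. -/
theorem lorentz_ideal_equiv_hsApprox (p : ℝ) (hp0 : 0 < p) (hp2 : p < 2)
    (q : ℝ≥0∞) (hq : 0 < q) :
    ∃ C : ℝ, 1 ≤ C ∧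
      ∀ (H : Type) (_ : NormedAddCommGroup H), ∀ (_ : InnerProductSpace ℂ H)
        (_ : CompleteSpace H) (ι : Type) (e : HilbertBasis ι ℂ H) (T : H →L[ℂ] H),
        IsCompactOperator (T : H → H) →
        lorentzNorm p q (fun n => ENNReal.ofReal (singVal T n)) ≤
            ENNReal.ofReal C *
              lorentzNorm p q
                (fun n => hsApprox e T n / ENNReal.ofReal (((n : ℝ) + 1) ^ (1 / 2 : ℝ))) ∧
          lorentzNorm p q
              (fun n => hsApprox e T n / ENNReal.ofReal (((n : ℝ) + 1) ^ (1 / 2 : ℝ))) ≤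
            ENNReal.ofReal C * lorentzNorm p q (fun n => ENNReal.ofReal (singVal T n)) := by
  obtain ⟨C, hC, h⟩ := lorentz_ideal_equiv_hsApprox_general hp0 hp2 hq
  exact ⟨C, hC, fun _ _ _ _ _ e T _ => h e T⟩
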